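/- Let G = (V,E) be a finite directed graph, let (c(e))_{e∈E} be nonnegative capacities, let x_0 ∈ V, and let (p_x)_{x∈V} be nonnegative reals. There exists a nonnegative function θ : E → ℝ_+ with div(θ) = Σ_{x∈V} p_x (δ_{x_0} − δ_x) and θ(e) ≤ c(e) for all e ∈ E, if and only if for every subset K ⊆ V containing x_0 one has c(∂_+K) ≥ Σ_{x ∈ K^c} p_x, where ∂_+K = {e ∈ E : tail(e) ∈ K, head(e) ∈ K^c} and c(∂_+K) = Σ_{e ∈ ∂_+K} c(e). Moreover, the same equivalence holds if the cut-set condition is only required for those K such that every y ∈ K can be reached from x_0 by a directed path contained in K. -/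

import Mathlib

open Finset

/-!
A flow with divergence `b` obeys the cut condition `b(K) ≤ c(∂₊K)` because the supply inside `K` has
to leave through `∂₊K`. For the converse, remove an edge `e = (u, v)` and let it carry `t = sup_K
(b(K) - c'(∂₊K))`, where `c'` is the capacity of the remaining edges. Sending `t` along `e` repairs
every cut that `e` crosses forwards; submodularity of the cut function shows that it breaks none
that `e` crosses backwards, and induction on the number of edges finishes the proof. Everything
stays in the lattice-ordered group in which the capacities and demands take their values, so
integral data admit integral flows.
-/

section Cut

variable {V R : Type*} [DecidableEq V]

/-- The total weight `w(∂₊K)` of the edges of `E` leaving `K`; `w` may be a capacity or a flow. -/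
def cutWeight [AddCommMonoid R] (E : Finset (V × V)) (w : V × V → R) (K : Finset V) : R :=
  ∑ e ∈ E.filter fun e => e.1 ∈ K ∧ e.2 ∉ K, w e

theorem cutWeight_empty [AddCommMonoid R] (E : Finset (V × V)) (w : V × V → R) :
    cutWeight E w ∅ = 0 := by
  simp [cutWeight]

theorem cutWeight_insert [AddCommMonoid R] {F : Finset (V × V)} {e : V × V} (he : e ∉ F)
    (w : V × V → R) (K : Finset V) :
    cutWeight (insert e F) w K =
      (if e.1 ∈ K ∧ e.2 ∉ K then w e else 0) + cutWeight F w K := by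
  simp only [cutWeight, sum_filter, sum_insert he]

variable [AddCommMonoid R] [PartialOrder R] [IsOrderedAddMonoid R] {E : Finset (V × V)}
  {w : V × V → R}

theorem cutWeight_nonneg (hw : ∀ e ∈ E, 0 ≤ w e) (K : Finset V) : 0 ≤ cutWeight E w K :=
  sum_nonneg fun e he => hw e (mem_of_mem_filter e he)

theorem cutWeight_le_cutWeight {w' : V × V → R} (h : ∀ e ∈ E, w e ≤ w' e) (K : Finset V) :
    cutWeight E w K ≤ cutWeight E w' K :=
  sum_le_sum fun e he => h e (mem_of_mem_filter e he)

theorem cutWeight_inter_add_cutWeight_union_le (hw : ∀ e ∈ E, 0 ≤ w e) (K L : Finset V) :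
    cutWeight E w (K ∩ L) + cutWeight E w (K ∪ L) ≤ cutWeight E w K + cutWeight E w L := by
  simp only [cutWeight, sum_filter, ← sum_add_distrib]
  refine sum_le_sum fun e he => ?_
  by_cases e.1 ∈ K <;> by_cases e.1 ∈ L <;> by_cases e.2 ∈ K <;> by_cases e.2 ∈ L <;>
    simp [*]

end Cut

section Divergence

variable {V R : Type*} [DecidableEq V] [AddCommGroup R]

/-- The divergence of `θ`, as a function on the edges `E`, at the vertex `x`. -/
def divergence (E : Finset (V × V)) (θ : V × V → R) (x : V) : R :=
  (∑ e ∈ E.filter fun e => e.1 = x, θ e) - ∑ e ∈ E.filter fun e => e.2 = x, θ e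

theorem sum_divergence (E : Finset (V × V)) (θ : V × V → R) (K : Finset V) :
    ∑ x ∈ K, divergence E θ x =
      cutWeight E θ K - ∑ e ∈ E.filter fun e => e.1 ∉ K ∧ e.2 ∈ K, θ e := by
  simp only [divergence, cutWeight, sum_sub_distrib, sum_filter]
  rw [sum_comm, sum_comm (s := K) (t := E), ← sum_sub_distrib, ← sum_sub_distrib]
  refine sum_congr rfl fun e _ => ?_
  by_cases e.1 ∈ K <;> by_cases e.2 ∈ K <;> simp [*]

/-- The divergence `t (δ_u - δ_v)` of an amount `t` sent along the edge `e = (u, v)`. -/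
def edgeDivergence (e : V × V) (t : R) : V → R :=
  Pi.single e.1 t - Pi.single e.2 t

theorem sum_edgeDivergence (e : V × V) (t : R) (K : Finset V) :
    ∑ x ∈ K, edgeDivergence e t x = (if e.1 ∈ K then t else 0) - if e.2 ∈ K then t else 0 := by
  simp only [edgeDivergence, Pi.sub_apply, sum_sub_distrib, sum_pi_single']

theorem divergence_insert_update {F : Finset (V × V)} {e : V × V} (he : e ∉ F)
    (θ : V × V → R) (t : R) :
    divergence (insert e F) (Function.update θ e t) = divergence F θ + edgeDivergence e t := by
  have sum_update (P : V × V → Prop) [DecidablePred P] :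
      ∑ f ∈ (insert e F).filter P, Function.update θ e t f =
        (if P e then t else 0) + ∑ f ∈ F.filter P, θ f := by
    rw [sum_filter, sum_insert he, Function.update_self, ← sum_filter]
    congr 1
    refine sum_congr rfl fun f hf => Function.update_of_ne ?_ t θ
    exact ne_of_mem_of_not_mem (mem_of_mem_filter f hf) he
  funext x
  simp only [divergence, sum_update, edgeDivergence, Pi.add_apply, Pi.sub_apply,
    Pi.single_apply, eq_comm (a := x)]
  abel

end Divergence

section Flow

variable {V R : Type*} [DecidableEq V] [AddCommGroup R]

/-- `θ` is a nonnegative flow on `E`, within the capacities `c`, whose divergence is the supply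
`b`. The function `θ` is defined, and nonnegative, on all of `V × V`, but only its values on `E`
enter the other two conditions. -/
def IsFlow [LE R] (E : Finset (V × V)) (c : V × V → R) (b : V → R) (θ : V × V → R) : Prop :=
  (∀ e, 0 ≤ θ e) ∧ (∀ e ∈ E, θ e ≤ c e) ∧ ∀ x, divergence E θ x = b x

theorem IsFlow.sum_eq_zero [Fintype V] [LE R] {E : Finset (V × V)} {c : V × V → R} {b : V → R}
    {θ : V × V → R} (h : IsFlow E c b θ) : ∑ x, b x = 0 := by
  simp only [← h.2.2, sum_divergence]
  simp [cutWeight]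

theorem IsFlow.sum_le_cutWeight [PartialOrder R] [IsOrderedAddMonoid R] {E : Finset (V × V)}
    {c : V × V → R} {b : V → R} {θ : V × V → R} (h : IsFlow E c b θ) (K : Finset V) :
    ∑ x ∈ K, b x ≤ cutWeight E c K :=
  calc ∑ x ∈ K, b x = cutWeight E θ K - ∑ e ∈ E.filter fun e => e.1 ∉ K ∧ e.2 ∈ K, θ e := by
        rw [← sum_divergence]
        exact sum_congr rfl fun x _ => (h.2.2 x).symm
    _ ≤ cutWeight E θ K := sub_le_self _ (sum_nonneg fun e _ => h.1 e)
    _ ≤ cutWeight E c K := cutWeight_le_cutWeight h.2.1 K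

theorem isFlow_empty [Preorder R] (c : V × V → R) : IsFlow ∅ c (0 : V → R) 0 :=
  ⟨fun _ => le_rfl, by simp, by simp [divergence]⟩

theorem IsFlow.insert_update [Preorder R] {F : Finset (V × V)} {c : V × V → R} {b : V → R}
    {θ : V × V → R} {e : V × V} (he : e ∉ F) {t : R} (ht₀ : 0 ≤ t) (htc : t ≤ c e)
    (h : IsFlow F c (b - edgeDivergence e t) θ) :
    IsFlow (insert e F) c b (Function.update θ e t) := by
  refine ⟨fun f => ?_, fun f hf => ?_, fun x => ?_⟩
  · obtain rfl | hne := eq_or_ne f e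
    · rwa [Function.update_self]
    · rw [Function.update_of_ne hne]
      exact h.1 f
  · obtain rfl | hne := eq_or_ne f e
    · rwa [Function.update_self]
    · rw [Function.update_of_ne hne]
      exact h.2.1 f (mem_of_mem_insert_of_ne hf hne)
  · rw [divergence_insert_update he, funext h.2.2, sub_add_cancel]

end Flow

section Gale

variable {V R : Type*} [DecidableEq V] [AddCommGroup R]

theorem sum_le_cutWeight_of_insert [LE R] {F : Finset (V × V)} {e : V × V} (he : e ∉ F)
    {c : V × V → R} {b : V → R} (hb : ∀ K, ∑ x ∈ K, b x ≤ cutWeight (insert e F) c K)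
    {K : Finset V} (hK : e.1 ∈ K → e.2 ∈ K) : ∑ x ∈ K, b x ≤ cutWeight F c K := by
  have := hb K
  rwa [cutWeight_insert he, if_neg fun h => h.2 (hK h.1), zero_add] at this

theorem sum_add_sum_le_cutWeight_add_cutWeight_of_insert [PartialOrder R] [IsOrderedAddMonoid R]
    {F : Finset (V × V)} {e : V × V} (he : e ∉ F) {c : V × V → R} (hc : ∀ f ∈ F, 0 ≤ c f)
    {b : V → R} (hb : ∀ K, ∑ x ∈ K, b x ≤ cutWeight (insert e F) c K) (K : Finset V)
    {L : Finset V} (h₁ : e.1 ∉ L) (h₂ : e.2 ∈ L) :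
    ∑ x ∈ K, b x + ∑ x ∈ L, b x ≤ cutWeight F c K + cutWeight F c L :=
  calc ∑ x ∈ K, b x + ∑ x ∈ L, b x = ∑ x ∈ K ∩ L, b x + ∑ x ∈ K ∪ L, b x := by
        rw [add_comm (∑ x ∈ K ∩ L, b x), sum_union_inter]
    _ ≤ cutWeight F c (K ∩ L) + cutWeight F c (K ∪ L) :=
        add_le_add
          (sum_le_cutWeight_of_insert he hb fun h => absurd (mem_of_mem_inter_right h) h₁)
          (sum_le_cutWeight_of_insert he hb fun _ => mem_union_right K h₂)
    _ ≤ cutWeight F c K + cutWeight F c L := cutWeight_inter_add_cutWeight_union_le hc K L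

variable [Lattice R] [IsOrderedAddMonoid R]

theorem exists_forall_sum_sub_edgeDivergence_le_cutWeight [Finite V] {F : Finset (V × V)}
    {e : V × V} (he : e ∉ F) {c : V × V → R} (hc : ∀ f ∈ insert e F, 0 ≤ c f) {b : V → R}
    (hb : ∀ K, ∑ x ∈ K, b x ≤ cutWeight (insert e F) c K) :
    ∃ t, 0 ≤ t ∧ t ≤ c e ∧
      ∀ K, ∑ x ∈ K, (b - edgeDivergence e t) x ≤ cutWeight F c K := by
  have := Fintype.ofFinite V
  let excess (K : Finset V) : R := ∑ x ∈ K, b x - cutWeight F c K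
  let t : R := univ.sup' univ_nonempty excess
  have excess_le (K : Finset V) : excess K ≤ t := le_sup' excess (mem_univ K)
  have le_slack (L : Finset V) (h₁ : e.1 ∉ L) (h₂ : e.2 ∈ L) :
      t ≤ cutWeight F c L - ∑ x ∈ L, b x := by
    refine sup'_le _ _ fun K _ => sub_le_sub_iff.mpr ?_
    rw [add_comm (cutWeight F c L)]
    exact sum_add_sum_le_cutWeight_add_cutWeight_of_insert he
      (fun f hf => hc f (mem_insert_of_mem hf)) hb K h₁ h₂
  refine ⟨t, ?_, sup'_le _ _ fun K _ => ?_, fun K => ?_⟩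
  · simpa only [excess, sum_empty, cutWeight_empty, sub_zero] using excess_le ∅
  · have hce : (if e.1 ∈ K ∧ e.2 ∉ K then c e else 0) ≤ c e := by
      split_ifs
      exacts [le_rfl, hc e (mem_insert_self e F)]
    exact sub_le_iff_le_add.mpr ((cutWeight_insert he c K ▸ hb K).trans (by gcongr))
  · simp only [Pi.sub_apply, sum_sub_distrib, sum_edgeDivergence]
    by_cases h₁ : e.1 ∈ K <;> by_cases h₂ : e.2 ∈ K <;> simp only [h₁, h₂, if_true, if_false]
    · simpa using sum_le_cutWeight_of_insert he hb fun _ => h₂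
    · rw [sub_zero]
      exact sub_le_comm.mp (excess_le K)
    · rw [zero_sub, sub_neg_eq_add, add_comm]
      exact le_sub_iff_add_le.mp (le_slack K h₁ h₂)
    · simpa using sum_le_cutWeight_of_insert he hb fun h => absurd h h₁

variable [Fintype V]

theorem exists_isFlow_of_sum_le_cutWeight {E : Finset (V × V)} {c : V × V → R}
    (hc : ∀ e ∈ E, 0 ≤ c e) {b : V → R} (hsum : ∑ x, b x = 0)
    (hb : ∀ K, ∑ x ∈ K, b x ≤ cutWeight E c K) : ∃ θ, IsFlow E c b θ := by
  induction E using Finset.induction_on generalizing b with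
  | empty =>
    have hnonpos : ∀ x, b x ≤ 0 := fun x => by simpa [cutWeight] using hb {x}
    have hzero : b = 0 :=
      funext fun x => (sum_eq_zero_iff_of_nonpos fun y _ => hnonpos y).mp hsum x (mem_univ x)
    exact ⟨0, hzero ▸ isFlow_empty c⟩
  | insert e F he ih =>
    obtain ⟨t, ht₀, htc, hcut⟩ := exists_forall_sum_sub_edgeDivergence_le_cutWeight he hc hb
    have hsum' : ∑ x, (b - edgeDivergence e t) x = 0 := by
      simp only [Pi.sub_apply, sum_sub_distrib, hsum, sum_edgeDivergence, mem_univ, if_true,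
        sub_self]
    obtain ⟨θ, hθ⟩ := ih (fun f hf => hc f (mem_insert_of_mem hf)) hsum' hcut
    exact ⟨_, hθ.insert_update he ht₀ htc⟩

/-- Gale's supply-demand theorem. -/
theorem exists_isFlow_iff {E : Finset (V × V)} {c : V × V → R} (hc : ∀ e ∈ E, 0 ≤ c e)
    {b : V → R} :
    (∃ θ, IsFlow E c b θ) ↔ ∑ x, b x = 0 ∧ ∀ K, ∑ x ∈ K, b x ≤ cutWeight E c K :=
  ⟨fun ⟨_, h⟩ => ⟨h.sum_eq_zero, h.sum_le_cutWeight⟩,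
    fun ⟨hsum, hb⟩ => exists_isFlow_of_sum_le_cutWeight hc hsum hb⟩

end Gale

section SingleSource

variable {V R : Type*} [Fintype V] [DecidableEq V] [AddCommGroup R]

/-- The supply `∑_x p_x (δ_{x₀} - δ_x)` of a source at `x₀` serving the demands `p`. -/
def sourceSupply (x₀ : V) (p : V → R) (x : V) : R :=
  (if x = x₀ then ∑ z, p z else 0) - p x

theorem sum_sourceSupply (x₀ : V) (p : V → R) (K : Finset V) :
    ∑ x ∈ K, sourceSupply x₀ p x = if x₀ ∈ K then ∑ x ∈ Kᶜ, p x else -∑ x ∈ K, p x := by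
  simp only [sourceSupply, sum_sub_distrib, sum_ite_eq', ← sum_add_sum_compl K p]
  split_ifs <;> abel

theorem exists_isFlow_sourceSupply_iff [Lattice R] [IsOrderedAddMonoid R] {E : Finset (V × V)}
    {c : V × V → R} (hc : ∀ e ∈ E, 0 ≤ c e) (x₀ : V) {p : V → R} (hp : ∀ x, 0 ≤ p x) :
    (∃ θ, IsFlow E c (sourceSupply x₀ p) θ) ↔
      ∀ K : Finset V, x₀ ∈ K → ∑ x ∈ Kᶜ, p x ≤ cutWeight E c K := by
  simp only [exists_isFlow_iff hc, sum_sourceSupply, mem_univ, if_true, compl_univ, sum_empty,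
    true_and]
  refine forall_congr' fun K => ?_
  by_cases hK : x₀ ∈ K
  · simp only [hK, if_true, true_imp_iff]
  · have hneg : -∑ x ∈ K, p x ≤ cutWeight E c K :=
      (neg_nonpos.mpr (sum_nonneg fun x _ => hp x)).trans (cutWeight_nonneg hc K)
    simp only [hK, if_false, false_imp_iff, hneg]

end SingleSource

section Accessible

variable {V : Type*}

/-- Every vertex of `K` can be reached from `x₀` by a directed path in `K`. Only the heads of the
edges are required to lie in `K`, which is the same thing when `x₀ ∈ K`. -/
def IsAccessible (E : Finset (V × V)) (x₀ : V) (K : Finset V) : Prop :=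
  ∀ y ∈ K, Relation.ReflTransGen (fun u v => (u, v) ∈ E ∧ v ∈ K) x₀ y

open scoped Classical in
/-- The vertices reachable from `x₀` by a directed path whose vertices after `x₀` lie in `K`. -/
noncomputable def accessiblePart [Fintype V] (E : Finset (V × V)) (x₀ : V)
    (K : Finset V) : Finset V :=
  univ.filter fun y => Relation.ReflTransGen (fun u v => (u, v) ∈ E ∧ v ∈ K) x₀ y

variable [Fintype V] {E : Finset (V × V)} {x₀ : V} {K : Finset V}

theorem mem_accessiblePart {y : V} : y ∈ accessiblePart E x₀ K ↔
    Relation.ReflTransGen (fun u v => (u, v) ∈ E ∧ v ∈ K) x₀ y := by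
  simp only [accessiblePart, mem_filter_univ]

theorem self_mem_accessiblePart : x₀ ∈ accessiblePart E x₀ K :=
  mem_accessiblePart.mpr .refl

theorem mem_accessiblePart_of_edge {u v : V} (hu : u ∈ accessiblePart E x₀ K) (huv : (u, v) ∈ E)
    (hv : v ∈ K) : v ∈ accessiblePart E x₀ K :=
  mem_accessiblePart.mpr ((mem_accessiblePart.mp hu).tail ⟨huv, hv⟩)

theorem accessiblePart_subset (hx₀ : x₀ ∈ K) : accessiblePart E x₀ K ⊆ K := by
  intro y hy
  obtain rfl | ⟨_, _, _, hyK⟩ := (mem_accessiblePart.mp hy).cases_tail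
  exacts [hx₀, hyK]

theorem isAccessible_accessiblePart : IsAccessible E x₀ (accessiblePart E x₀ K) := by
  intro y hy
  induction mem_accessiblePart.mp hy with
  | refl => exact .refl
  | tail hu huv ih =>
    have hu' := mem_accessiblePart.mpr hu
    exact (ih hu').tail ⟨huv.1, mem_accessiblePart_of_edge hu' huv.1 huv.2⟩

variable {R : Type*} [DecidableEq V] [AddCommMonoid R] [PartialOrder R] [IsOrderedAddMonoid R]
  {c : V × V → R}

theorem cutWeight_accessiblePart_le (hc : ∀ e ∈ E, 0 ≤ c e) (hx₀ : x₀ ∈ K) :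
    cutWeight E c (accessiblePart E x₀ K) ≤ cutWeight E c K := by
  refine sum_le_sum_of_subset_of_nonneg (fun e he => ?_)
    fun e he _ => hc e (mem_of_mem_filter e he)
  obtain ⟨heE, he₁, he₂⟩ := mem_filter.mp he
  exact mem_filter.mpr ⟨heE, accessiblePart_subset hx₀ he₁,
    fun h => he₂ (mem_accessiblePart_of_edge he₁ heE h)⟩

theorem forall_sum_compl_le_cutWeight_iff_isAccessible
    (hc : ∀ e ∈ E, 0 ≤ c e) {p : V → R} (hp : ∀ x, 0 ≤ p x) :
    (∀ K : Finset V, x₀ ∈ K → ∑ x ∈ Kᶜ, p x ≤ cutWeight E c K) ↔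
      ∀ K : Finset V, x₀ ∈ K → IsAccessible E x₀ K → ∑ x ∈ Kᶜ, p x ≤ cutWeight E c K := by
  refine ⟨fun h K hK _ => h K hK, fun h K hK => ?_⟩
  calc ∑ x ∈ Kᶜ, p x ≤ ∑ x ∈ (accessiblePart E x₀ K)ᶜ, p x :=
        sum_le_sum_of_subset_of_nonneg (compl_subset_compl.mpr (accessiblePart_subset hK))
          fun x _ _ => hp x
    _ ≤ cutWeight E c (accessiblePart E x₀ K) :=
        h _ self_mem_accessiblePart isAccessible_accessiblePart
    _ ≤ cutWeight E c K := cutWeight_accessiblePart_le hc hK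

end Accessible

theorem maxflow_mincut_general {V R : Type*} [Fintype V] [DecidableEq V] [AddCommGroup R]
    [Lattice R] [IsOrderedAddMonoid R] (E : Finset (V × V)) {c : V × V → R}
    (hc : ∀ e ∈ E, 0 ≤ c e) (x₀ : V) {p : V → R} (hp : ∀ x, 0 ≤ p x) :
    ((∃ θ, IsFlow E c (sourceSupply x₀ p) θ) ↔
      ∀ K : Finset V, x₀ ∈ K → ∑ x ∈ Kᶜ, p x ≤ cutWeight E c K) ∧
    ((∃ θ, IsFlow E c (sourceSupply x₀ p) θ) ↔
      ∀ K : Finset V, x₀ ∈ K → IsAccessible E x₀ K → ∑ x ∈ Kᶜ, p x ≤ cutWeight E c K) :=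
  have all_cuts := exists_isFlow_sourceSupply_iff hc x₀ hp
  ⟨all_cuts, all_cuts.trans (forall_sum_compl_le_cutWeight_iff_isAccessible hc hp)⟩

/-- **generalized max-flow min-cut.** On a finite directed graph with
capacities `c`, a source `x₀` and nonnegative demands `(p_x)`, there exists a nonnegative
flow `θ ≤ c` with `div θ = ∑_x p_x (δ_{x₀} - δ_x)` if and only if every cut
`∂_+K` with `x₀ ∈ K` satisfies `c(∂_+K) ≥ ∑_{x ∈ Kᶜ} p_x`; moreover it suffices to
require the cut condition for the sets `K` all of whose points are reachable from `x₀`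
by a directed path in `K`. -/
theorem maxflow_mincut
    {V : Type*} [Fintype V] [DecidableEq V]
    (E : Finset (V × V)) (hE : ∀ e ∈ E, e.1 ≠ e.2)
    (c : V × V → ℝ) (hc : ∀ e ∈ E, 0 ≤ c e)
    (x₀ : V) (p : V → ℝ) (hp : ∀ x, 0 ≤ p x) :
    ((∃ θ : V × V → ℝ, (∀ e, 0 ≤ θ e) ∧ (∀ e ∈ E, θ e ≤ c e) ∧
        ∀ x : V, ((∑ e ∈ E.filter fun e => e.1 = x, θ e) -
            ∑ e ∈ E.filter fun e => e.2 = x, θ e) =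
          (if x = x₀ then ∑ z, p z else 0) - p x) ↔
      (∀ K : Finset V, x₀ ∈ K →
        ∑ x ∈ Kᶜ, p x ≤ ∑ e ∈ E.filter fun e => e.1 ∈ K ∧ e.2 ∉ K, c e)) ∧
    ((∃ θ : V × V → ℝ, (∀ e, 0 ≤ θ e) ∧ (∀ e ∈ E, θ e ≤ c e) ∧
        ∀ x : V, ((∑ e ∈ E.filter fun e => e.1 = x, θ e) -
            ∑ e ∈ E.filter fun e => e.2 = x, θ e) =
          (if x = x₀ then ∑ z, p z else 0) - p x) ↔
      (∀ K : Finset V, x₀ ∈ K →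
        (∀ y ∈ K, Relation.ReflTransGen (fun u v => (u, v) ∈ E ∧ v ∈ K) x₀ y) →
        ∑ x ∈ Kᶜ, p x ≤ ∑ e ∈ E.filter fun e => e.1 ∈ K ∧ e.2 ∉ K, c e)) :=
  maxflow_mincut_general E hc x₀ hp
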